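/- For every g ≥ 5, the block-inclusion homomorphism Sp^q_{2g}(ℤ) → Sp^q_{2(g+1)}(ℤ), given by extending a matrix by the identity on one additional symplectic basis pair, induces an isomorphism on abelianisations. -/

import Mathlib

open Matrix

/-- Index type for `2g × 2g` matrices: the first `g` indices correspond to the
basis vectors `e₁, …, e_g` and the last `g` to `f₁, …, f_g`. -/
abbrev HypIdx (g : ℕ) := Fin g ⊕ Fin g

/-- Gram matrix of the orthogonal sum of `g` hyperbolic planes. -/
def Qmat (g : ℕ) : Matrix (HypIdx g) (HypIdx g) ℤ := Matrix.fromBlocks 0 1 1 0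

/-- The standard symplectic form matrix. -/
def Jmat (g : ℕ) : Matrix (HypIdx g) (HypIdx g) ℤ := Matrix.fromBlocks 0 1 (-1) 0

/-- The subgroup of `GL_{2g}(ℤ)` of matrices `A` with `Aᵀ * Q * A = Q`. -/
def formGroup (g : ℕ) (Q : Matrix (HypIdx g) (HypIdx g) ℤ) :
    Subgroup (GL (HypIdx g) ℤ) where
  carrier := {A | A.valᵀ * Q * A.val = Q}
  one_mem' := by simp
  mul_mem' := by
    intro A B hA hB
    have hA' : A.valᵀ * Q * A.val = Q := hA
    have hB' : B.valᵀ * Q * B.val = Q := hB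
    show (A * B).valᵀ * Q * (A * B).val = Q
    rw [Units.val_mul, transpose_mul]
    calc B.valᵀ * A.valᵀ * Q * (A.val * B.val)
        = B.valᵀ * (A.valᵀ * Q * A.val) * B.val := by noncomm_ring
      _ = B.valᵀ * Q * B.val := by rw [hA']
      _ = Q := hB'
  inv_mem' := by
    intro A hA
    have hA' : A.valᵀ * Q * A.val = Q := hA
    show (A⁻¹).valᵀ * Q * (A⁻¹).val = Q
    have h1 : A.val * (A⁻¹).val = 1 := by
      rw [← Units.val_mul, mul_inv_cancel, Units.val_one]
    calc (A⁻¹).valᵀ * Q * (A⁻¹).val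
        = (A⁻¹).valᵀ * (A.valᵀ * Q * A.val) * (A⁻¹).val := by rw [hA']
      _ = (A.val * (A⁻¹).val)ᵀ * Q * (A.val * (A⁻¹).val) := by
          rw [transpose_mul]; noncomm_ring
      _ = Q := by rw [h1]; simp

/-- `O_{g,g}(ℤ)`. -/
def Ogg (g : ℕ) : Subgroup (GL (HypIdx g) ℤ) := formGroup g (Qmat g)

/-- `Sp_{2g}(ℤ)`. -/
def Sp (g : ℕ) : Subgroup (GL (HypIdx g) ℤ) := formGroup g (Jmat g)

/-- The standard quadratic refinement `q(x, y) = Σᵢ xᵢ yᵢ mod 2`. -/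
def qform (g : ℕ) (v : HypIdx g → ℤ) : ZMod 2 :=
  ∑ i : Fin g, ((v (Sum.inl i) * v (Sum.inr i) : ℤ) : ZMod 2)

/-- The subgroup of `GL_{2g}(ℤ)` preserving the quadratic refinement `q`. -/
def qPreserving (g : ℕ) : Subgroup (GL (HypIdx g) ℤ) where
  carrier := {A | ∀ v : HypIdx g → ℤ, qform g (A.val.mulVec v) = qform g v}
  one_mem' := by intro v; simp
  mul_mem' := by
    intro A B hA hB v
    show qform g ((A * B).val.mulVec v) = qform g v
    rw [Units.val_mul, ← Matrix.mulVec_mulVec, hA, hB]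
  inv_mem' := by
    intro A hA v
    have h1 : A.val.mulVec ((A⁻¹).val.mulVec v) = v := by
      rw [Matrix.mulVec_mulVec, ← Units.val_mul, mul_inv_cancel, Units.val_one,
        Matrix.one_mulVec]
    calc qform g ((A⁻¹).val.mulVec v)
        = qform g (A.val.mulVec ((A⁻¹).val.mulVec v)) := (hA _).symm
      _ = qform g v := by rw [h1]

/-- `Sp^q_{2g}(ℤ)`: symplectic matrices preserving the quadratic refinement. -/
def Spq (g : ℕ) : Subgroup (GL (HypIdx g) ℤ) := Sp g ⊓ qPreserving g
/-- Extension of a `2g × 2g` matrix to a `2(g+1) × 2(g+1)` matrix, acting as the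
original matrix on the first `g` hyperbolic/symplectic basis pairs and as the
identity on the additional pair. -/
def extendMat {g : ℕ} (A : Matrix (HypIdx g) (HypIdx g) ℤ) :
    Matrix (HypIdx (g + 1)) (HypIdx (g + 1)) ℤ := fun i j =>
  match i, j with
  | Sum.inl a, Sum.inl b =>
      if h : a.val < g ∧ b.val < g then A (Sum.inl ⟨a.val, h.1⟩) (Sum.inl ⟨b.val, h.2⟩)
      else if a = b then 1 else 0
  | Sum.inl a, Sum.inr b =>
      if h : a.val < g ∧ b.val < g then A (Sum.inl ⟨a.val, h.1⟩) (Sum.inr ⟨b.val, h.2⟩) else 0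
  | Sum.inr a, Sum.inl b =>
      if h : a.val < g ∧ b.val < g then A (Sum.inr ⟨a.val, h.1⟩) (Sum.inl ⟨b.val, h.2⟩) else 0
  | Sum.inr a, Sum.inr b =>
      if h : a.val < g ∧ b.val < g then A (Sum.inr ⟨a.val, h.1⟩) (Sum.inr ⟨b.val, h.2⟩)
      else if a = b then 1 else 0

/-!
For `g ≥ 3` every elementary transformation in `Sp^q_{2g}(ℤ)` is a commutator. These transformations
and the quarter turns `(x_k, y_k) ↦ (-y_k, x_k)` generate the group, by Euclidean reduction of
primitive vectors, and all quarter turns are conjugate and of order dividing four. Hence the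
abelianization is cyclic, generated by the class of any quarter turn, which the block inclusion
sends to a quarter turn.

The order of this class is exactly four. Indeed `θ(τ)²` transforms under `Sp^q_{2g}(ℤ)` with the
automorphy factor `det (C τ + D)` up to a scalar. Written as the function `θ(P Q⁻¹)² / det Q` of a
frame `(P, Q)`, it is multiplied by a scalar alone, and this defines a character whose value on a
quarter turn is `-i`, by the inversion formula for Jacobi's theta function.
-/

section PartialInversion

variable {ι : Type*} (R : Type*) [CommRing R] [DecidableEq ι]

/-- The symplectic matrix of the partial inversion `(x_k, y_k) ↦ (-y_k, x_k)`, over any ring. -/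
def partialInversion (k : ι) : Matrix (ι ⊕ ι) (ι ⊕ ι) R :=
  fromBlocks (1 - single k k 1) (-single k k 1) (single k k 1) (1 - single k k 1)

variable {R} [Fintype ι]

lemma partialInversion_mulVec_inl (k : ι) (w : ι ⊕ ι → R) (i : ι) :
    (partialInversion R k *ᵥ w) (Sum.inl i) = if i = k then -w (Sum.inr i) else w (Sum.inl i) := by
  rw [partialInversion, fromBlocks_mulVec]
  rcases eq_or_ne i k with rfl | h <;>
    simp [sub_mulVec, neg_mulVec, single_mulVec, *]

lemma partialInversion_mulVec_inr (k : ι) (w : ι ⊕ ι → R) (i : ι) :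
    (partialInversion R k *ᵥ w) (Sum.inr i) = if i = k then w (Sum.inl i) else w (Sum.inr i) := by
  rw [partialInversion, fromBlocks_mulVec]
  rcases eq_or_ne i k with rfl | h <;>
    simp [sub_mulVec, single_mulVec, *]

end PartialInversion

lemma bijective_of_orderOf_eq {G H : Type*} [Group G] [Group H] {f : G →* H} {x : G}
    (hx : Subgroup.zpowers x = ⊤) (hfx : Subgroup.zpowers (f x) = ⊤)
    (h : orderOf (f x) = orderOf x) : Function.Bijective f := by
  refine ⟨(injective_iff_map_eq_one f).2 fun y hy => ?_, fun z => ?_⟩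
  · obtain ⟨n, rfl⟩ := Subgroup.mem_zpowers_iff.1 (hx ▸ Subgroup.mem_top y)
    rwa [map_zpow, ← orderOf_dvd_iff_zpow_eq_one, h, orderOf_dvd_iff_zpow_eq_one] at hy
  · obtain ⟨n, rfl⟩ := Subgroup.mem_zpowers_iff.1 (hfx ▸ Subgroup.mem_top z)
    exact ⟨x ^ n, map_zpow f x n⟩

namespace Spq

open Sum
open scoped commutatorElement

variable {g : ℕ}

/-! ### The symplectic form and its quadratic refinement -/

/-- The standard symplectic form on `ℤ²ᵍ`. -/
noncomputable def symplForm (g : ℕ) : LinearMap.BilinForm ℤ (HypIdx g → ℤ) :=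
  Matrix.toBilin' (Jmat g)

lemma symplForm_apply (v w : HypIdx g → ℤ) :
    symplForm g v w = ∑ i, (v (inl i) * w (inr i) - v (inr i) * w (inl i)) := by
  rw [symplForm, Matrix.toBilin'_apply', Jmat, fromBlocks_mulVec]
  simp [dotProduct, Matrix.neg_mulVec, sub_eq_add_neg, Finset.sum_add_distrib]

lemma symplForm_isAlt : (symplForm g).IsAlt := fun v => by
  rw [symplForm_apply]
  exact Finset.sum_eq_zero fun i _ => by ring

@[simp] lemma symplForm_self (v : HypIdx g → ℤ) : symplForm g v v = 0 := symplForm_isAlt v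

lemma symplForm_swap (v w : HypIdx g → ℤ) : symplForm g v w = -symplForm g w v :=
  (symplForm_isAlt.neg_eq w v).symm

lemma symplForm_eq_zero_comm {v w : HypIdx g → ℤ} :
    symplForm g v w = 0 ↔ symplForm g w v = 0 := by
  rw [symplForm_swap, neg_eq_zero]

lemma qform_add (v w : HypIdx g → ℤ) :
    qform g (v + w) = qform g v + qform g w + (symplForm g v w : ZMod 2) := by
  simp only [qform, symplForm_apply, Int.cast_sum, ← Finset.sum_add_distrib, Pi.add_apply]
  refine Finset.sum_congr rfl fun i _ => ?_
  push_cast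
  rw [CharTwo.sub_eq_add]
  ring

lemma qform_smul (c : ℤ) (v : HypIdx g → ℤ) : qform g (c • v) = c * qform g v := by
  simp only [qform, Finset.mul_sum, Pi.smul_apply, smul_eq_mul]
  refine Finset.sum_congr rfl fun i _ => ?_
  push_cast
  rw [mul_mul_mul_comm, ← pow_two, ZMod.pow_card (p := 2)]

lemma transpose_mul_Jmat_mul_iff {A : Matrix (HypIdx g) (HypIdx g) ℤ} :
    Aᵀ * Jmat g * A = Jmat g ↔
      ∀ v w, symplForm g (A *ᵥ v) (A *ᵥ w) = symplForm g v w := by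
  have h : (symplForm g).comp (toLin' A) (toLin' A) = toBilin' (Aᵀ * Jmat g * A) :=
    Matrix.toBilin'_comp ..
  rw [← (toBilin' (R₁ := ℤ)).injective.eq_iff, ← h]
  simp [LinearMap.ext_iff₂, symplForm]

/-! ### The action on vectors -/

lemma smul_def (A : Spq g) (v : HypIdx g → ℤ) : A • v = A.val.val *ᵥ v := rfl

@[simp] lemma symplForm_smul_smul (A : Spq g) (v w : HypIdx g → ℤ) :
    symplForm g (A • v) (A • w) = symplForm g v w :=
  transpose_mul_Jmat_mul_iff.1 A.2.1 v w

@[simp] lemma qform_act (A : Spq g) (v : HypIdx g → ℤ) : qform g (A • v) = qform g v :=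
  A.2.2 v

lemma ext_smul {A B : Spq g} (h : ∀ v : HypIdx g → ℤ, A • v = B • v) : A = B :=
  Subtype.ext (Units.ext (Matrix.ext_of_mulVec_single fun p => h (Pi.single p 1)))

lemma mem_symplecticGroup {A : Matrix (HypIdx g) (HypIdx g) ℤ} :
    A ∈ symplecticGroup (Fin g) ℤ ↔ Aᵀ * Jmat g * A = Jmat g := by
  have hJ : Matrix.J (Fin g) ℤ = -Jmat g := by
    simp [Matrix.J, Jmat, fromBlocks_neg]
  rw [SymplecticGroup.mem_iff', hJ, mul_neg, neg_mul, neg_inj]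

/-- The element of `Spq g` with a given matrix; invertibility is automatic because a symplectic
matrix has unit determinant. -/
noncomputable def ofMatrix (A : Matrix (HypIdx g) (HypIdx g) ℤ)
    (hω : ∀ v w, symplForm g (A *ᵥ v) (A *ᵥ w) = symplForm g v w)
    (hq : ∀ v, qform g (A *ᵥ v) = qform g v) : Spq g :=
  ⟨GeneralLinearGroup.mk'' A
    (SymplecticGroup.symplectic_det (mem_symplecticGroup.2 (transpose_mul_Jmat_mul_iff.2 hω))),
    transpose_mul_Jmat_mul_iff.2 hω, hq⟩

@[simp] lemma coe_ofMatrix (A : Matrix (HypIdx g) (HypIdx g) ℤ) (hω hq) :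
    (ofMatrix A hω hq).val.val = A := rfl

/-- The element of `Spq g` given by a linear map. -/
noncomputable def ofLinearMap (f : (HypIdx g → ℤ) →ₗ[ℤ] HypIdx g → ℤ)
    (hω : ∀ v w, symplForm g (f v) (f w) = symplForm g v w)
    (hq : ∀ v, qform g (f v) = qform g v) : Spq g :=
  ofMatrix f.toMatrix' (by simpa using hω) (by simpa using hq)

@[simp] lemma ofLinearMap_smul (f : (HypIdx g → ℤ) →ₗ[ℤ] HypIdx g → ℤ) (hω hq)
    (v : HypIdx g → ℤ) : ofLinearMap f hω hq • v = f v :=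
  f.toMatrix'_mulVec v

/-! ### Eichler transformations -/

/-- The conditions on `(u, v, c)` under which the Eichler transformation
`w ↦ w + ω(w, u) v + (ω(w, v) + c ω(w, u)) u` lies in `Spq g`. -/
structure IsEichlerDatum (u v : HypIdx g → ℤ) (c : ℤ) : Prop where
  symplForm_eq_zero : symplForm g v u = 0
  qform_left : qform g u = 0
  qform_right : qform g v = c

lemma IsEichlerDatum.smul {u v : HypIdx g → ℤ} {c : ℤ} (h : IsEichlerDatum u v c) (A : Spq g) :
    IsEichlerDatum (A • u) (A • v) c :=
  ⟨by simp [h.1], by simp [h.2], by simp [h.3]⟩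

lemma IsEichlerDatum.add {u v v' : HypIdx g → ℤ} {c c' : ℤ} (h : IsEichlerDatum u v c)
    (h' : IsEichlerDatum u v' c') : IsEichlerDatum u (v + v') (c + c' + symplForm g v' v) where
  symplForm_eq_zero := by simp [h.1, h'.1]
  qform_left := h.2
  qform_right := by
    rw [qform_add, h.3, h'.3, symplForm_swap]
    push_cast
    rw [CharTwo.neg_eq]

/-- The Eichler transformation `w ↦ w + ω(w, u) v + (ω(w, v) + c ω(w, u)) u`. -/
noncomputable def eichler {u v : HypIdx g → ℤ} {c : ℤ} (h : IsEichlerDatum u v c) : Spq g :=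
  ofLinearMap
    (LinearMap.id + (LinearMap.flip (symplForm g) u).smulRight v +
      (LinearMap.flip (symplForm g) v + c • LinearMap.flip (symplForm g) u).smulRight u)
    (fun w w' => by
      have h' := symplForm_eq_zero_comm.1 h.1
      simp only [LinearMap.add_apply, LinearMap.id_apply, LinearMap.smulRight_apply,
        LinearMap.flip_apply, map_add, map_smul, LinearMap.smul_apply, smul_eq_mul, h.1, h',
        symplForm_self]
      rw [symplForm_swap v w', symplForm_swap u w']
      ring)
    (fun w => by
      simp only [LinearMap.add_apply, LinearMap.id_apply, LinearMap.smulRight_apply,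
        LinearMap.flip_apply, qform_add, qform_smul, map_smul, map_add, LinearMap.smul_apply,
        smul_eq_mul, h.1, h.2, h.3]
      push_cast
      linear_combination CharTwo.add_self_eq_zero ((symplForm g w u : ZMod 2) * c) +
        CharTwo.add_self_eq_zero ((symplForm g w u : ZMod 2) * (symplForm g w v : ZMod 2)) +
        (c : ZMod 2) * ZMod.pow_card (p := 2) (symplForm g w u : ZMod 2))

lemma eichler_smul {u v : HypIdx g → ℤ} {c : ℤ} (h : IsEichlerDatum u v c)
    (w : HypIdx g → ℤ) : eichler h • w =
      w + symplForm g w u • v + (symplForm g w v + c * symplForm g w u) • u :=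
  ofLinearMap_smul ..

lemma eichler_congr {u u' v v' : HypIdx g → ℤ} {c c' : ℤ} (h : IsEichlerDatum u v c)
    (h' : IsEichlerDatum u' v' c') (hu : u = u') (hv : v = v') (hc : c = c') :
    eichler h = eichler h' := by
  subst hu hv hc
  rfl

lemma conj_eichler (A : Spq g) {u v : HypIdx g → ℤ} {c : ℤ} (h : IsEichlerDatum u v c) :
    A * eichler h * A⁻¹ = eichler (h.smul A) := by
  refine ext_smul fun w => ?_
  obtain ⟨w, rfl⟩ := MulAction.surjective A w
  simp only [mul_smul, inv_smul_smul, eichler_smul, smul_add, smul_comm A, symplForm_smul_smul]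

lemma eichler_mul_eichler {u v v' : HypIdx g → ℤ} {c c' : ℤ} (h : IsEichlerDatum u v c)
    (h' : IsEichlerDatum u v' c') : eichler h * eichler h' = eichler (h.add h') := by
  refine ext_smul fun w => ?_
  simp only [mul_smul, eichler_smul, map_add, map_smul, LinearMap.add_apply, LinearMap.smul_apply,
    symplForm_eq_zero_comm.1 h.1, h'.1, symplForm_self, smul_eq_mul]
  module

/-! ### Elementary transformations and quarter turns -/

/-- The index `i` of the symplectic pair `(e_i, f_i)` containing a basis vector. -/
def pairIndex : HypIdx g → Fin g := Sum.elim id id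

/-- The sign `-1` on the `e_i` and `1` on the `f_i`, so that `ω(w, b_p) = pairSign p * w p.swap` for
the basis vectors `b_p`. -/
def pairSign : HypIdx g → ℤ := Sum.elim (fun _ => -1) (fun _ => 1)

@[simp] lemma pairIndex_inl (i : Fin g) : pairIndex (inl i) = i := rfl

@[simp] lemma pairIndex_inr (i : Fin g) : pairIndex (inr i) = i := rfl

@[simp] lemma pairIndex_swap (p : HypIdx g) : pairIndex p.swap = pairIndex p := by
  cases p <;> rfl

@[simp] lemma pairSign_inl (i : Fin g) : pairSign (inl i) = -1 := rfl

@[simp] lemma pairSign_inr (i : Fin g) : pairSign (inr i) = 1 := rfl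

@[simp] lemma pairSign_mul_self (p : HypIdx g) : pairSign p * pairSign p = 1 := by
  cases p <;> simp

@[simp] lemma pairSign_swap (p : HypIdx g) : pairSign p.swap = -pairSign p := by
  cases p <;> simp

lemma swap_ne_self (p : HypIdx g) : p.swap ≠ p := by cases p <;> simp

lemma eq_or_eq_swap_of_pairIndex_eq {p q : HypIdx g} (h : pairIndex p = pairIndex q) :
    p = q ∨ p = q.swap := by
  cases p <;> cases q <;> simp_all

lemma symplForm_single (w : HypIdx g → ℤ) (p : HypIdx g) (c : ℤ) :
    symplForm g w (Pi.single p c) = pairSign p * w p.swap * c := by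
  cases p <;> simp [symplForm_apply, Pi.single_apply]

lemma qform_single (p : HypIdx g) (c : ℤ) : qform g (Pi.single p c) = 0 := by
  cases p <;> simp [qform, Pi.single_apply]

lemma isEichlerDatum_single {p : HypIdx g} {v : HypIdx g → ℤ} {c : ℤ} (hv : v p.swap = 0)
    (hc : qform g v = c) : IsEichlerDatum (Pi.single p 1) v c :=
  ⟨by rw [symplForm_single, hv, mul_zero, zero_mul], qform_single p 1, hc⟩

lemma isEichlerDatum_single_single {p q : HypIdx g} (h : q ≠ p.swap) (c : ℤ) :
    IsEichlerDatum (Pi.single p 1) (Pi.single q c) 0 :=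
  isEichlerDatum_single (Pi.single_eq_of_ne' h _) (by rw [qform_single, Int.cast_zero])

/-- The elementary transformation `w ↦ w + c (ω(w, b_p) b_q + ω(w, b_q) b_p)`, where `b_p` are the
basis vectors. -/
noncomputable def elementary {p q : HypIdx g} (h : q ≠ p.swap) (c : ℤ) : Spq g :=
  eichler (isEichlerDatum_single_single h c)

lemma elementary_smul {p q : HypIdx g} (h : q ≠ p.swap) (c : ℤ) (w : HypIdx g → ℤ) :
    elementary h c • w = w + Pi.single q (pairSign p * w p.swap * c) +
      Pi.single p (pairSign q * w q.swap * c) := by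
  rw [elementary, eichler_smul, symplForm_single, symplForm_single, zero_mul, add_zero,
    ← Pi.single_smul, ← Pi.single_smul, smul_eq_mul, smul_eq_mul, mul_one, mul_one]

lemma conj_elementary (A : Spq g) {p q p' q' : HypIdx g} (h : q ≠ p.swap) (h' : q' ≠ p'.swap)
    (c : ℤ) (hp : A • (Pi.single p 1 : HypIdx g → ℤ) = Pi.single p' 1)
    (hq : A • (Pi.single q 1 : HypIdx g → ℤ) = Pi.single q' 1) :
    A * elementary h c * A⁻¹ = elementary h' c := by
  have h_smul (r : HypIdx g) : (Pi.single r c : HypIdx g → ℤ) = c • Pi.single r 1 := by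
    rw [← Pi.single_smul, smul_eq_mul, mul_one]
  rw [elementary, conj_eichler]
  exact eichler_congr _ _ hp (by rw [h_smul, h_smul, smul_comm A, hq]) rfl

/-- The quarter turn `(x_k, y_k) ↦ (-y_k, x_k)` of a symplectic pair of coordinates. -/
noncomputable def quarterTurn (k : Fin g) : Spq g :=
  ofMatrix (partialInversion ℤ k)
    (fun v w => by
      simp only [symplForm_apply, partialInversion_mulVec_inl, partialInversion_mulVec_inr]
      refine Finset.sum_congr rfl fun i _ => ?_
      split_ifs <;> ring)
    (fun v => by
      simp only [qform, partialInversion_mulVec_inl, partialInversion_mulVec_inr]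
      refine Finset.sum_congr rfl fun i _ => ?_
      split_ifs
      · push_cast
        rw [CharTwo.neg_eq, mul_comm]
      · rfl)

lemma quarterTurn_smul_inl (k : Fin g) (w : HypIdx g → ℤ) (i : Fin g) :
    (quarterTurn k • w) (inl i) = if i = k then -w (inr i) else w (inl i) :=
  partialInversion_mulVec_inl k w i

lemma quarterTurn_smul_inr (k : Fin g) (w : HypIdx g → ℤ) (i : Fin g) :
    (quarterTurn k • w) (inr i) = if i = k then w (inl i) else w (inr i) :=
  partialInversion_mulVec_inr k w i

lemma quarterTurn_smul_single_inl (k : Fin g) :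
    quarterTurn k • (Pi.single (inl k) 1 : HypIdx g → ℤ) = Pi.single (inr k) 1 := by
  ext (i | i) <;> simp [quarterTurn_smul_inl, quarterTurn_smul_inr, Pi.single_apply]

lemma quarterTurn_smul_single {k : Fin g} {p : HypIdx g} (h : pairIndex p ≠ k) :
    quarterTurn k • (Pi.single p 1 : HypIdx g → ℤ) = Pi.single p 1 := by
  obtain i | i := p <;> ext (j | j) <;>
    simp only [quarterTurn_smul_inl, quarterTurn_smul_inr, Pi.single_apply] <;>
    grind [pairIndex_inl, pairIndex_inr]

/-! ### Generation by elementary transformations and quarter turns -/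

/-- The subgroup generated by the elementary transformations and quarter turns that involve only
the symplectic pairs indexed by `S`. -/
def elementarySubgroup (S : Finset (Fin g)) : Subgroup (Spq g) :=
  Subgroup.closure ({A | ∃ p q, ∃ h : q ≠ p.swap, ∃ c, pairIndex p ∈ S ∧ pairIndex q ∈ S ∧
    elementary h c = A} ∪ quarterTurn '' S)

variable {S : Finset (Fin g)}

lemma elementary_mem_elementarySubgroup {p q : HypIdx g} (hp : pairIndex p ∈ S)
    (hq : pairIndex q ∈ S) (h : q ≠ p.swap) (c : ℤ) : elementary h c ∈ elementarySubgroup S :=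
  Subgroup.subset_closure (Or.inl ⟨p, q, h, c, hp, hq, rfl⟩)

lemma quarterTurn_mem_elementarySubgroup {k : Fin g} (hk : k ∈ S) :
    quarterTurn k ∈ elementarySubgroup S :=
  Subgroup.subset_closure (Or.inr ⟨k, hk, rfl⟩)

lemma elementarySubgroup_mono {T : Finset (Fin g)} (h : S ⊆ T) :
    elementarySubgroup S ≤ elementarySubgroup T := by
  refine Subgroup.closure_mono (Set.union_subset_union ?_ (Set.image_mono h))
  rintro _ ⟨p, q, hpq, c, hp, hq, rfl⟩
  exact ⟨p, q, hpq, c, h hp, h hq, rfl⟩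

lemma smul_apply_of_smul_single {A : Spq g} {p : HypIdx g}
    (h : A • (Pi.single p.swap 1 : HypIdx g → ℤ) = Pi.single p.swap 1) (w : HypIdx g → ℤ) :
    (A • w) p = w p := by
  have hω := symplForm_smul_smul A w (Pi.single p.swap 1)
  rw [h, symplForm_single, symplForm_single, Sum.swap_swap, mul_one, mul_one] at hω
  exact mul_left_cancel₀ (left_ne_zero_of_mul (by simp : pairSign p.swap * pairSign p.swap ≠ 0)) hω

/-- The pointwise stabilizer of the basis vectors outside the symplectic pairs indexed by `S`. -/
abbrev outerStabilizer (S : Finset (Fin g)) : Subgroup (Spq g) :=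
  fixingSubgroup (Spq g) ((fun p => (Pi.single p 1 : HypIdx g → ℤ)) '' {p | pairIndex p ∉ S})

lemma mem_outerStabilizer {A : Spq g} : A ∈ outerStabilizer S ↔
    ∀ p, pairIndex p ∉ S → A • (Pi.single p 1 : HypIdx g → ℤ) = Pi.single p 1 := by
  simp only [outerStabilizer, mem_fixingSubgroup_iff, Set.forall_mem_image, Set.mem_ofPred_eq]

lemma smul_apply_of_mem_outerStabilizer {A : Spq g} (hA : A ∈ outerStabilizer S) {p : HypIdx g}
    (hp : pairIndex p ∉ S) (w : HypIdx g → ℤ) : (A • w) p = w p :=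
  smul_apply_of_smul_single (mem_outerStabilizer.1 hA _ (by rwa [pairIndex_swap])) w

lemma elementarySubgroup_le_outerStabilizer : elementarySubgroup S ≤ outerStabilizer S := by
  refine (Subgroup.closure_le _).2 (Set.union_subset ?_ ?_)
  · rintro _ ⟨p, q, h, c, hp, hq, rfl⟩
    refine mem_outerStabilizer.2 fun r hr => ?_
    have hpr : p.swap ≠ r := by rintro rfl; exact hr (by rwa [pairIndex_swap])
    have hqr : q.swap ≠ r := by rintro rfl; exact hr (by rwa [pairIndex_swap])
    simp [elementary_smul, hpr, hqr]
  · rintro _ ⟨k, hk, rfl⟩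
    exact mem_outerStabilizer.2 fun r hr =>
      quarterTurn_smul_single fun h => hr (h ▸ hk)

lemma exists_eichler_mem_elementarySubgroup {p : HypIdx g} (hp : pairIndex p ∈ S)
    {v : HypIdx g → ℤ} (hv : ∀ q, pairIndex q ∉ S → v q = 0) (hvp : v p.swap = 0) :
    ∃ c, ∃ h : IsEichlerDatum (Pi.single p 1) v c, eichler h ∈ elementarySubgroup S := by
  let P (v : HypIdx g → ℤ) : Prop :=
    ∃ c, ∃ h : IsEichlerDatum (Pi.single p 1) v c, eichler h ∈ elementarySubgroup S
  have h_single {q : HypIdx g} (hq : pairIndex q ∈ S) (hqp : q ≠ p.swap) (m : ℤ) :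
      P (Pi.single q m) :=
    ⟨0, isEichlerDatum_single_single hqp m, elementary_mem_elementarySubgroup hp hq hqp m⟩
  have h_zero : P 0 := Pi.single_zero (M := fun _ => ℤ) p ▸ h_single hp (swap_ne_self p).symm 0
  rw [← Finset.univ_sum_single v]
  refine Finset.sum_induction _ P ?_ h_zero fun q _ => ?_
  · rintro v v' ⟨c, h, hmem⟩ ⟨c', h', hmem'⟩
    exact ⟨_, h.add h', eichler_mul_eichler h h' ▸ mul_mem hmem hmem'⟩
  · by_cases hq : pairIndex q ∈ S ∧ q ≠ p.swap
    · exact h_single hq.1 hq.2 _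
    · obtain hq | rfl : pairIndex q ∉ S ∨ q = p.swap := by tauto
      · rwa [hv q hq, Pi.single_zero]
      · rwa [hvp, Pi.single_zero]

lemma eichler_mem_elementarySubgroup {p : HypIdx g} (hp : pairIndex p ∈ S) {v : HypIdx g → ℤ}
    (hv : ∀ q, pairIndex q ∉ S → v q = 0) {c : ℤ} (h : IsEichlerDatum (Pi.single p 1) v c) :
    eichler h ∈ elementarySubgroup S := by
  have hvp : v p.swap = 0 := by
    have := h.1
    rw [symplForm_single, mul_one] at this
    exact (mul_eq_zero.1 this).resolve_left (left_ne_zero_of_mul_eq_one (pairSign_mul_self p))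
  obtain ⟨c₀, h₀, hmem⟩ := exists_eichler_mem_elementarySubgroup hp hv hvp
  obtain ⟨d, hd⟩ : (2 : ℤ) ∣ c - c₀ :=
    (ZMod.intCast_eq_intCast_iff_dvd_sub c₀ c 2).1 (h₀.3.symm.trans h.3)
  have h_eq : eichler h = eichler h₀ * elementary (swap_ne_self p).symm d := by
    obtain rfl : c = c₀ + 2 * d := by linarith
    have hpv (m : ℤ) : symplForm g (Pi.single p m) v = 0 := by
      rw [symplForm_swap, symplForm_single, hvp, mul_zero, zero_mul, neg_zero]
    refine ext_smul fun w => ?_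
    ext q
    simp only [mul_smul, eichler_smul, elementary_smul, map_add, LinearMap.add_apply,
      symplForm_single, hpv, Pi.add_apply, Pi.smul_apply, Pi.single_apply, swap_ne_self,
      smul_eq_mul, if_false]
    split_ifs <;> ring
  rw [h_eq]
  exact mul_mem hmem (elementary_mem_elementarySubgroup hp hp _ d)

/-! ### Reduction of primitive vectors -/

lemma exists_eq_single_add (w : HypIdx g → ℤ) (p : HypIdx g) :
    ∃ x : HypIdx g → ℤ, w = Pi.single p (w p) + Pi.single p.swap (w p.swap) + x ∧
      x p = 0 ∧ x p.swap = 0 ∧ ∀ q, w q = 0 → x q = 0 := by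
  refine ⟨fun q => if pairIndex q = pairIndex p then 0 else w q, ?_, by simp, by simp,
    fun q hq => by simp [hq]⟩
  ext q
  by_cases h : pairIndex q = pairIndex p
  · obtain rfl | rfl := eq_or_eq_swap_of_pairIndex_eq h <;>
      simp [(swap_ne_self _).symm, swap_ne_self]
  · have hp : q ≠ p := by rintro rfl; exact h rfl
    have hp' : q ≠ p.swap := by rintro rfl; exact h (pairIndex_swap p)
    simp [h, hp, hp']

lemma exists_smul_eq_single {p : HypIdx g} (hp : pairIndex p ∈ S) {w : HypIdx g → ℤ}
    (hw : ∀ q, pairIndex q ∉ S → w q = 0) (hq : qform g w = 0) (hwp : w p = 1) :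
    ∃ A ∈ elementarySubgroup S, A • w = Pi.single p 1 ∧
      A • (Pi.single p.swap 1 : HypIdx g → ℤ) = Pi.single p.swap 1 := by
  obtain ⟨x, hx, hxp, hxp', hx0⟩ := exists_eq_single_add w p
  have hpx (m : ℤ) : symplForm g (Pi.single p m) x = 0 := by
    rw [symplForm_swap, symplForm_single, hxp', mul_zero, zero_mul, neg_zero]
  have hpx' (m : ℤ) : symplForm g (Pi.single p.swap m) x = 0 := by
    rw [symplForm_swap, symplForm_single, Sum.swap_swap, hxp, mul_zero, zero_mul, neg_zero]
  have hqx : qform g x = w p.swap := by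
    rw [hx, qform_add, qform_add, qform_single, qform_single, map_add, LinearMap.add_apply,
      hpx, hpx', symplForm_single, Sum.swap_swap, Pi.single_eq_same, hwp] at hq
    have hs : (pairSign p.swap : ZMod 2) = 1 := by cases p <;> simp
    push_cast [hs] at hq
    exact (CharTwo.add_eq_zero.1 (by linear_combination hq)).symm
  have h : IsEichlerDatum (Pi.single p.swap 1) (pairSign p • x) (pairSign p * w p.swap) :=
    isEichlerDatum_single (by simp [hxp]) (by rw [qform_smul, hqx, Int.cast_mul])
  have hwx : symplForm g w x = 0 := by
    rw [hx, map_add, map_add, LinearMap.add_apply, LinearMap.add_apply, hpx, hpx', symplForm_self]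
    rfl
  refine ⟨eichler h, eichler_mem_elementarySubgroup (by rwa [pairIndex_swap])
    (fun q hq => by simp [hx0 q (hw q hq)]) h, ?_, ?_⟩
  · rw [eichler_smul, map_smul, hwx, symplForm_single, Sum.swap_swap, pairSign_swap, hwp]
    nth_rewrite 1 [hx]
    ext q
    simp only [hwp, Pi.add_apply, Pi.smul_apply, Pi.single_apply, smul_eq_mul]
    have hs := pairSign_mul_self p
    split_ifs <;> grind
  · rw [eichler_smul, symplForm_self, map_smul, hpx']
    simp

lemma dvd_apply_inl_of_minimal {w : HypIdx g → ℤ} {i : Fin g} (hi : i ∈ S) (hwi : w (inl i) ≠ 0)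
    (hmin : ∀ A ∈ elementarySubgroup S, ∀ j ∈ S, (A • w) (inl j) ≠ 0 →
      |w (inl i)| ≤ |(A • w) (inl j)|) {j : Fin g} (hj : j ∈ S) : w (inl i) ∣ w (inl j) := by
  obtain rfl | hij := eq_or_ne j i
  · rfl
  by_contra h
  have hij' : (inr i : HypIdx g) ≠ (inl j : HypIdx g).swap := by simp [hij.symm]
  set A := elementary hij' (-(w (inl j) / w (inl i))) with hA
  have hA_smul : (A • w) (inl j) = w (inl j) % w (inl i) := by
    simp [hA, elementary_smul, Int.emod_def, sub_eq_add_neg]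
  refine (hmin A (elementary_mem_elementarySubgroup hj hi hij' _) j hj ?_).not_gt ?_
  · rwa [hA_smul, Ne, ← Int.dvd_iff_emod_eq_zero]
  · rw [hA_smul, abs_of_nonneg (Int.emod_nonneg _ hwi)]
    exact Int.emod_lt_abs _ hwi

/-- Elementary transformations change `w (inr i)` only by multiples of `2 * w (inl i)`, whence the
balanced remainder; minimality does not exclude the remainder `-|w (inl i)|`, which is harmless. -/
lemma dvd_apply_inr_self_of_minimal {w : HypIdx g → ℤ} {i : Fin g} (hi : i ∈ S)
    (hwi : w (inl i) ≠ 0)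
    (hmin : ∀ A ∈ elementarySubgroup S, ∀ j ∈ S, (A • w) (inl j) ≠ 0 →
      |w (inl i)| ≤ |(A • w) (inl j)|) : w (inl i) ∣ w (inr i) := by
  set m := w (inl i)
  set r := (w (inr i)).bmod (2 * m.natAbs)
  have h_mod : 2 * m ∣ r - w (inr i) := by
    have := Int.dvd_bmod_sub_self (x := w (inr i)) (m := 2 * m.natAbs)
    rwa [Nat.cast_mul, Int.natCast_natAbs, Nat.cast_ofNat, ← abs_two, ← abs_mul, abs_dvd] at this
  obtain ⟨c, hc⟩ := h_mod
  have hii : (inr i : HypIdx g) ≠ (inr i : HypIdx g).swap := (swap_ne_self _).symm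
  have hA : elementary hii c ∈ elementarySubgroup S :=
    elementary_mem_elementarySubgroup (by simpa) (by simpa) hii c
  have hA_smul : ((quarterTurn i * elementary hii c) • w) (inl i) = -r := by
    simp only [mul_smul, quarterTurn_smul_inl, elementary_smul, Pi.add_apply, Pi.single_eq_same,
      Sum.swap_inr, pairSign_inr, if_true]
    linear_combination hc
  have hr : r = 0 ∨ r = -|m| := by
    have h_le := hmin _ (mul_mem (quarterTurn_mem_elementarySubgroup hi) hA) i hi
    rw [hA_smul, abs_neg] at h_le
    have h_lower : -((2 * m.natAbs : ℕ) / 2 : ℤ) ≤ r := Int.le_bmod (by omega)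
    have h_upper : r < ((2 * m.natAbs : ℕ) + 1) / 2 := Int.bmod_lt (by omega)
    simp only [Int.abs_eq_natAbs] at h_le ⊢
    by_cases h : r = 0 <;> omega
  have hmr : m ∣ r := by rcases hr with hr | hr <;> simp [hr]
  exact (dvd_sub_right hmr).1 ((dvd_mul_left m 2).trans ⟨c, hc⟩)

lemma dvd_apply_of_minimal {w : HypIdx g → ℤ} {i : Fin g} (hi : i ∈ S) (hwi : w (inl i) ≠ 0)
    (hmin : ∀ A ∈ elementarySubgroup S, ∀ j ∈ S, (A • w) (inl j) ≠ 0 →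
      |w (inl i)| ≤ |(A • w) (inl j)|) {p : HypIdx g} (hp : pairIndex p ∈ S) :
    w (inl i) ∣ w p := by
  obtain j | j := p
  · exact dvd_apply_inl_of_minimal hi hwi hmin hp
  obtain rfl | hij := eq_or_ne j i
  · exact dvd_apply_inr_self_of_minimal hi hwi hmin
  have h_eq : (quarterTurn j • w) (inl i) = w (inl i) := by
    rw [quarterTurn_smul_inl, if_neg hij.symm]
  have h_dvd : (quarterTurn j • w) (inl i) ∣ (quarterTurn j • w) (inl j) := by
    refine dvd_apply_inl_of_minimal hi (h_eq ▸ hwi) (fun A hA k hk => ?_) hp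
    rw [h_eq, ← mul_smul]
    exact hmin _ (mul_mem hA (quarterTurn_mem_elementarySubgroup hp)) k hk
  rwa [h_eq, quarterTurn_smul_inl, if_pos rfl, dvd_neg] at h_dvd

/-- Minimizing a nonzero coordinate over the orbit of `w` produces a common divisor of all
coordinates, hence a divisor of `ω(w, v)`. -/
lemma exists_isUnit_smul_apply_inl {w v : HypIdx g → ℤ} (hw : ∀ q, pairIndex q ∉ S → w q = 0)
    (hwv : IsUnit (symplForm g w v)) :
    ∃ A ∈ elementarySubgroup S, ∃ i ∈ S, IsUnit ((A • w) (inl i)) := by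
  let P (n : ℕ) : Prop := ∃ A ∈ elementarySubgroup S, ∃ i ∈ S, (A • w) (inl i) ≠ 0 ∧
    ((A • w) (inl i)).natAbs = n
  have hP : ∃ n, P n := by
    obtain ⟨p, hp⟩ : ∃ p, w p ≠ 0 := by
      by_contra! h
      rw [show w = 0 from funext h, map_zero, LinearMap.zero_apply] at hwv
      exact not_isUnit_zero hwv
    have hpS : pairIndex p ∈ S := by_contra fun h => hp (hw p h)
    obtain i | i := p
    · exact ⟨_, 1, one_mem _, i, hpS, by rwa [one_smul], rfl⟩
    · refine ⟨_, quarterTurn i, quarterTurn_mem_elementarySubgroup hpS, i, hpS, ?_, rfl⟩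
      rwa [quarterTurn_smul_inl, if_pos rfl, neg_ne_zero]
  classical
  obtain ⟨A, hA, i, hi, hne, hnat⟩ := Nat.find_spec hP
  refine ⟨A, hA, i, hi, isUnit_of_dvd_unit ?_ hwv⟩
  have h_dvd (p : HypIdx g) : (A • w) (inl i) ∣ (A • w) p := by
    by_cases hp : pairIndex p ∈ S
    · refine dvd_apply_of_minimal hi hne (fun B hB j hj hBj => ?_) hp
      rw [Int.abs_eq_natAbs, Int.abs_eq_natAbs, hnat, Nat.cast_le]
      exact Nat.find_min' hP ⟨B * A, mul_mem hB hA, j, hj, by rwa [mul_smul], by rw [mul_smul]⟩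
    · rw [smul_apply_of_mem_outerStabilizer (elementarySubgroup_le_outerStabilizer hA) hp, hw p hp]
      exact dvd_zero _
  rw [← symplForm_smul_smul A, symplForm_apply]
  exact Finset.dvd_sum fun j _ =>
    dvd_sub ((h_dvd _).mul_right _) ((h_dvd _).mul_right _)

lemma exists_smul_apply_inl_eq_one {w v : HypIdx g → ℤ} (hw : ∀ q, pairIndex q ∉ S → w q = 0)
    (hwv : IsUnit (symplForm g w v)) {k : Fin g} (hk : k ∈ S) :
    ∃ A ∈ elementarySubgroup S, (A • w) (inl k) = 1 := by
  obtain ⟨A, hA, i, hi, hu⟩ := exists_isUnit_smul_apply_inl hw hwv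
  obtain rfl | hki := eq_or_ne k i
  · obtain h | h := Int.isUnit_iff.1 hu
    · exact ⟨A, hA, h⟩
    · have hJ := quarterTurn_mem_elementarySubgroup hk
      refine ⟨quarterTurn k * quarterTurn k * A, mul_mem (mul_mem hJ hJ) hA, ?_⟩
      simp [mul_smul, quarterTurn_smul_inl, quarterTurn_smul_inr, h]
  · have hne : (inr i : HypIdx g) ≠ (inl k : HypIdx g).swap := by simp [hki.symm]
    refine ⟨elementary hne ((1 - (A • w) (inl k)) * (A • w) (inl i)) * A,
      mul_mem (elementary_mem_elementarySubgroup hk hi hne _) hA, ?_⟩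
    simp only [mul_smul, elementary_smul, Pi.add_apply, Pi.single_eq_same, Sum.swap_inr,
      pairSign_inr, Pi.single_eq_of_ne (Sum.inl_ne_inr : (inl k : HypIdx g) ≠ inr i)]
    linear_combination (1 - (A • w) (inl k)) * Int.isUnit_mul_self hu

lemma exists_smul_mul_mem_outerStabilizer {k : Fin g} {T : Finset (Fin g)} {A : Spq g}
    (hA : A ∈ outerStabilizer (insert k T)) :
    ∃ B ∈ elementarySubgroup (insert k T), B * A ∈ outerStabilizer T := by
  have hk : k ∈ insert k T := Finset.mem_insert_self k T
  have h_outer {C : Spq g} (hC : C ∈ outerStabilizer (insert k T)) {p q : HypIdx g}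
      (hp : pairIndex p = k) (hq : pairIndex q ∉ insert k T) :
      (C • (Pi.single p 1 : HypIdx g → ℤ)) q = 0 := by
    rw [smul_apply_of_mem_outerStabilizer hC hq, Pi.single_eq_of_ne]
    rintro rfl
    exact hq (hp ▸ hk)
  have hle := elementarySubgroup_le_outerStabilizer (S := insert k T)
  obtain ⟨B₁, hB₁, h₁⟩ := exists_smul_apply_inl_eq_one
    (w := A • Pi.single (inl k) 1) (v := A • Pi.single (inr k) 1) (fun q => h_outer hA rfl)
    (by simp [symplForm_single]) hk
  obtain ⟨B₂, hB₂, h₂, -⟩ := exists_smul_eq_single (p := inl k)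
    (w := (B₁ * A) • Pi.single (inl k) 1) hk
    (fun q => h_outer (mul_mem (hle hB₁) hA) rfl) (by rw [qform_act, qform_single])
    (by rwa [mul_smul])
  set C := B₂ * (B₁ * A) with hC
  have hC_mem : C ∈ outerStabilizer (insert k T) := mul_mem (hle hB₂) (mul_mem (hle hB₁) hA)
  have hC_inl : C • (Pi.single (inl k) 1 : HypIdx g → ℤ) = Pi.single (inl k) 1 := by
    rwa [hC, mul_smul]
  obtain ⟨B₃, hB₃, h₃, h₃'⟩ := exists_smul_eq_single (p := inr k) (w := C • Pi.single (inr k) 1) hk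
    (fun q => h_outer hC_mem rfl) (by rw [qform_act, qform_single])
    (by rw [smul_apply_of_smul_single hC_inl, Pi.single_eq_same])
  refine ⟨B₃ * (B₂ * B₁), mul_mem hB₃ (mul_mem hB₂ hB₁), mem_outerStabilizer.2 fun p hp => ?_⟩
  rw [mul_assoc, mul_assoc, ← hC, mul_smul]
  by_cases hpk : pairIndex p = k
  · obtain i | i := p <;> obtain rfl : i = k := hpk
    · rw [hC_inl]
      exact h₃'
    · exact h₃
  · rw [← mul_smul]
    exact mem_outerStabilizer.1 (mul_mem (hle hB₃) hC_mem) p (by simp [hpk, hp])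

theorem elementarySubgroup_eq_outerStabilizer (S : Finset (Fin g)) :
    elementarySubgroup S = outerStabilizer S := by
  refine le_antisymm elementarySubgroup_le_outerStabilizer ?_
  induction S using Finset.induction_on with
  | empty =>
    intro A hA
    have hA_one : A = 1 := ext_smul fun w => funext fun p => by
      rw [smul_apply_of_mem_outerStabilizer hA (Finset.notMem_empty _), one_smul]
    exact hA_one ▸ one_mem _
  | insert k T _ ih =>
    intro A hA
    obtain ⟨B, hB, hBA⟩ := exists_smul_mul_mem_outerStabilizer hA
    exact ((elementarySubgroup (insert k T)).mul_mem_cancel_left hB).1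
      (elementarySubgroup_mono (Finset.subset_insert k T) (ih hBA))

theorem closure_elementary_union_quarterTurn :
    Subgroup.closure ({A | ∃ (p q : HypIdx g) (h : q ≠ p.swap) (c : ℤ), elementary h c = A} ∪
      Set.range quarterTurn) = (⊤ : Subgroup (Spq g)) := by
  rw [eq_top_iff]
  intro A _
  have hA : A ∈ elementarySubgroup Finset.univ := by
    rw [elementarySubgroup_eq_outerStabilizer, mem_outerStabilizer]
    exact fun p hp => absurd (Finset.mem_univ _) hp
  simpa [elementarySubgroup] using hA

lemma inl_ne_swap_inl (i j : Fin g) : (inl j : HypIdx g) ≠ (inl i : HypIdx g).swap := inl_ne_inr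

theorem closure_elementary_inl_union_quarterTurn :
    Subgroup.closure ({A | ∃ (i j : Fin g) (c : ℤ),
      elementary (inl_ne_swap_inl i j) c = A} ∪ Set.range quarterTurn) = ⊤ := by
  set K : Subgroup (Spq g) := Subgroup.closure _
  have h_turn (k : Fin g) : quarterTurn k ∈ K := Subgroup.subset_closure (.inr ⟨k, rfl⟩)
  have h_conj (k : Fin g) {A B : Spq g} (hA : A ∈ K)
      (hAB : quarterTurn k * A * (quarterTurn k)⁻¹ = B) : B ∈ K :=
    hAB ▸ mul_mem (mul_mem (h_turn k) hA) (inv_mem (h_turn k))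
  have h_inl_inl (i j : Fin g) (h : inl j ≠ (inl i).swap) (c : ℤ) : elementary h c ∈ K :=
    Subgroup.subset_closure (.inl ⟨i, j, c, rfl⟩)
  have h_inr_inl (i j : Fin g) (h : inl j ≠ (inr i).swap) (c : ℤ) : elementary h c ∈ K :=
    h_conj i (h_inl_inl i j (inl_ne_swap_inl i j) c) <| conj_elementary _ _ _ _
      (quarterTurn_smul_single_inl i) (quarterTurn_smul_single fun h' => h (congrArg inl h'))
  have h_elementary (p q : HypIdx g) (h : q ≠ p.swap) (c : ℤ) : elementary h c ∈ K := by
    obtain i | i := p <;> obtain j | j := q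
    · exact h_inl_inl i j h c
    · exact h_conj j (h_inl_inl i j (inl_ne_swap_inl i j) c) <| conj_elementary _ _ _ _
        (quarterTurn_smul_single fun h' => h (congrArg inr h'.symm)) (quarterTurn_smul_single_inl j)
    · exact h_inr_inl i j h c
    · rcases eq_or_ne i j with rfl | hij
      · exact h_conj i (h_inl_inl i i (inl_ne_swap_inl i i) c) <| conj_elementary _ _ _ _
          (quarterTurn_smul_single_inl i) (quarterTurn_smul_single_inl i)
      · exact h_conj j (h_inr_inl i j (fun h' => hij (inl_injective h').symm) c) <|
          conj_elementary _ _ _ _ (quarterTurn_smul_single hij) (quarterTurn_smul_single_inl j)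
  rw [eq_top_iff, ← closure_elementary_union_quarterTurn, Subgroup.closure_le]
  rintro _ (⟨p, q, h, c, rfl⟩ | ⟨k, rfl⟩)
  exacts [h_elementary p q h c, h_turn k]

/-! ### The abelianization is cyclic -/

lemma commutatorElement_elementary {p q : HypIdx g} {r : Fin g} (hpq : q ≠ p.swap)
    (hrp : r ≠ pairIndex p) (hrq : r ≠ pairIndex q) (c : ℤ) :
    ⁅elementary (p := inl r) (q := q) (ne_of_apply_ne pairIndex hrq.symm) (-c),
      elementary (p := p) (q := inr r) (ne_of_apply_ne pairIndex (by simpa)) 1⁆ =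
      elementary hpq c := by
  have hp : p ≠ inr r := ne_of_apply_ne pairIndex hrp.symm
  have hp' : p ≠ q.swap := fun h => hpq (by rw [h, Sum.swap_swap])
  have hr : inr r ≠ q.swap := ne_of_apply_ne pairIndex (by simpa)
  have hX : q ≠ (inl r : HypIdx g).swap := ne_of_apply_ne pairIndex hrq.symm
  rw [commutatorElement_def, mul_inv_eq_iff_eq_mul]
  simp only [elementary]
  rw [conj_eichler, eichler_mul_eichler]
  refine eichler_congr _ _ ?_ ?_ ?_
  · change elementary hX (-c) • Pi.single p 1 = _
    simp [elementary_smul, hp, hp']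
  · change elementary hX (-c) • Pi.single (inr r) 1 = _
    simp [elementary_smul, hr, add_comm]
  · simp [symplForm_single, hr.symm]

theorem elementary_mem_commutator (hg : 3 ≤ g) {p q : HypIdx g} (h : q ≠ p.swap) (c : ℤ) :
    elementary h c ∈ commutator (Spq g) := by
  obtain ⟨r, hr⟩ : ∃ r : Fin g, r ∉ ({pairIndex p, pairIndex q} : Finset (Fin g)) := by
    refine Finset.exists_mem_notMem_of_card_lt_card (t := Finset.univ) ?_ |>.imp fun _ => And.right
    exact Finset.card_le_two.trans_lt (by simpa using Nat.succ_le_iff.1 hg)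
  obtain ⟨hrp, hrq⟩ : r ≠ pairIndex p ∧ r ≠ pairIndex q := by simpa using hr
  rw [← commutatorElement_elementary h hrp hrq]
  exact Subgroup.commutator_mem_commutator (Subgroup.mem_top _) (Subgroup.mem_top _)

/-- The permutation of the symplectic pairs induced by `σ`. -/
noncomputable def permutePairs (σ : Equiv.Perm (Fin g)) : Spq g :=
  ofLinearMap (LinearMap.funLeft ℤ ℤ (Sum.map σ σ))
    (fun v w => by
      simp only [symplForm_apply, LinearMap.funLeft_apply, Sum.map_inl, Sum.map_inr]
      exact Equiv.sum_comp σ fun i => v (inl i) * w (inr i) - v (inr i) * w (inl i))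
    (fun v => by
      simp only [qform, LinearMap.funLeft_apply, Sum.map_inl, Sum.map_inr]
      exact Equiv.sum_comp σ fun i => ((v (inl i) * v (inr i) : ℤ) : ZMod 2))

lemma permutePairs_smul_apply (σ : Equiv.Perm (Fin g)) (w : HypIdx g → ℤ) (p : HypIdx g) :
    (permutePairs σ • w) p = w (Sum.map σ σ p) := by
  rw [permutePairs, ofLinearMap_smul, LinearMap.funLeft_apply]

lemma permutePairs_mul_quarterTurn (σ : Equiv.Perm (Fin g)) (k : Fin g) :
    permutePairs σ * quarterTurn (σ k) = quarterTurn k * permutePairs σ := by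
  refine ext_smul fun w => ?_
  ext (i | i) <;>
    simp [mul_smul, permutePairs_smul_apply, quarterTurn_smul_inl, quarterTurn_smul_inr]

lemma isConj_quarterTurn (k l : Fin g) : IsConj (quarterTurn k) (quarterTurn l) :=
  isConj_iff.2 ⟨permutePairs (Equiv.swap k l), by
    rw [mul_inv_eq_iff_eq_mul, ← permutePairs_mul_quarterTurn, Equiv.swap_apply_right]⟩

lemma quarterTurn_pow_four (k : Fin g) : quarterTurn k ^ 4 = 1 := by
  refine ext_smul fun w => ?_
  ext (i | i) <;> obtain rfl | h := eq_or_ne i k <;>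
    simp [pow_succ, mul_smul, quarterTurn_smul_inl, quarterTurn_smul_inr, *]

theorem zpowers_abelianization_of_quarterTurn (hg : 3 ≤ g) (k : Fin g) :
    Subgroup.zpowers (Abelianization.of (quarterTurn k)) = ⊤ := by
  have h_comap : (Subgroup.zpowers (Abelianization.of (quarterTurn k))).comap Abelianization.of =
      ⊤ := by
    rw [eq_top_iff, ← closure_elementary_union_quarterTurn, Subgroup.closure_le]
    rintro _ (⟨p, q, h, c, rfl⟩ | ⟨l, rfl⟩)
    · refine Subgroup.ker_le_comap _ _ ?_
      rw [Abelianization.ker_of]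
      exact elementary_mem_commutator hg h c
    · rw [SetLike.mem_coe, Subgroup.mem_comap,
        isConj_iff_eq.1 (Abelianization.of.map_isConj (isConj_quarterTurn l k))]
      exact Subgroup.mem_zpowers _
  refine eq_top_iff.2 fun a _ => ?_
  obtain ⟨A, rfl⟩ := QuotientGroup.mk_surjective a
  exact Subgroup.mem_comap.1 (h_comap ▸ Subgroup.mem_top A)

/-! ### Stabilization -/

/-- The coordinates of a vector on the first `g` symplectic pairs. -/
def initPairs (w : HypIdx (g + 1) → ℤ) : HypIdx g → ℤ :=
  w ∘ Sum.map Fin.castSucc Fin.castSucc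

lemma ext_initPairs {v w : HypIdx (g + 1) → ℤ} (h : initPairs v = initPairs w)
    (hl : v (inl (Fin.last g)) = w (inl (Fin.last g)))
    (hr : v (inr (Fin.last g)) = w (inr (Fin.last g))) : v = w := by
  ext (i | i)
  · exact Fin.lastCases hl (fun i => congrFun h (inl i)) i
  · exact Fin.lastCases hr (fun i => congrFun h (inr i)) i

lemma symplForm_succ (v w : HypIdx (g + 1) → ℤ) :
    symplForm (g + 1) v w = symplForm g (initPairs v) (initPairs w) +
      (v (inl (Fin.last g)) * w (inr (Fin.last g)) -
        v (inr (Fin.last g)) * w (inl (Fin.last g))) := by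
  rw [symplForm_apply, symplForm_apply, Fin.sum_univ_castSucc]
  rfl

lemma qform_succ (v : HypIdx (g + 1) → ℤ) : qform (g + 1) v =
    qform g (initPairs v) + ((v (inl (Fin.last g)) * v (inr (Fin.last g)) : ℤ) : ZMod 2) := by
  rw [qform, Fin.sum_univ_castSucc]
  rfl

lemma initPairs_extendMat_mulVec (A : Matrix (HypIdx g) (HypIdx g) ℤ) (w : HypIdx (g + 1) → ℤ) :
    initPairs (extendMat A *ᵥ w) = A *ᵥ initPairs w := by
  ext (i | i) <;>
    simp [initPairs, extendMat, mulVec, dotProduct, Fintype.sum_sum_type, Fin.sum_univ_castSucc,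
      Fin.ext_iff, i.is_lt.ne]

lemma extendMat_mulVec_inl_last (A : Matrix (HypIdx g) (HypIdx g) ℤ) (w : HypIdx (g + 1) → ℤ) :
    (extendMat A *ᵥ w) (inl (Fin.last g)) = w (inl (Fin.last g)) := by
  simp [extendMat, mulVec, dotProduct, Fintype.sum_sum_type]

lemma extendMat_mulVec_inr_last (A : Matrix (HypIdx g) (HypIdx g) ℤ) (w : HypIdx (g + 1) → ℤ) :
    (extendMat A *ᵥ w) (inr (Fin.last g)) = w (inr (Fin.last g)) := by
  simp [extendMat, mulVec, dotProduct, Fintype.sum_sum_type]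

/-- The block inclusion `Sp^q_{2g}(ℤ) → Sp^q_{2(g+1)}(ℤ)`. -/
noncomputable def stabilize : Spq g →* Spq (g + 1) where
  toFun A := ofMatrix (extendMat A.val.val)
    (fun v w => by
      simp only [symplForm_succ, initPairs_extendMat_mulVec, extendMat_mulVec_inl_last,
        extendMat_mulVec_inr_last, ← smul_def, symplForm_smul_smul])
    (fun v => by
      simp only [qform_succ, initPairs_extendMat_mulVec, extendMat_mulVec_inl_last,
        extendMat_mulVec_inr_last, ← smul_def, qform_act])
  map_one' := ext_smul fun w => ext_initPairs
    (by simp [smul_def, initPairs_extendMat_mulVec])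
    (by simp [smul_def, extendMat_mulVec_inl_last])
    (by simp [smul_def, extendMat_mulVec_inr_last])
  map_mul' A B := ext_smul fun w => ext_initPairs
    (by simp [mul_smul, smul_def, ← mulVec_mulVec, initPairs_extendMat_mulVec])
    (by simp [mul_smul, smul_def, extendMat_mulVec_inl_last])
    (by simp [mul_smul, smul_def, extendMat_mulVec_inr_last])

lemma coe_stabilize (A : Spq g) : (stabilize A).val.val = extendMat A.val.val := rfl

lemma stabilize_quarterTurn (k : Fin g) : stabilize (quarterTurn k) = quarterTurn k.castSucc := by
  refine ext_smul fun w => ?_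
  have h_smul : stabilize (quarterTurn k) • w = extendMat (quarterTurn k).val.val *ᵥ w := rfl
  have h_last : Fin.last g ≠ k.castSucc := (Fin.castSucc_ne_last k).symm
  rw [h_smul]
  refine ext_initPairs ?_ ?_ ?_
  · rw [initPairs_extendMat_mulVec, ← smul_def]
    ext (i | i) <;> simp [initPairs, quarterTurn_smul_inl, quarterTurn_smul_inr]
  · rw [extendMat_mulVec_inl_last, quarterTurn_smul_inl, if_neg h_last]
  · rw [extendMat_mulVec_inr_last, quarterTurn_smul_inr, if_neg h_last]

end Spq

section ThetaConstant

open Complex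
open scoped MatrixOrder

/-! ### The Siegel theta constant -/

variable {ι : Type*}

lemma exists_pos_posSemidef_sub_smul_one [Finite ι] [DecidableEq ι] {B : Matrix ι ι ℝ}
    (hB : B.PosDef) : ∃ c : ℝ, 0 < c ∧ (B - c • (1 : Matrix ι ι ℝ)).PosSemidef := by
  cases nonempty_fintype ι
  cases isEmpty_or_nonempty ι
  · exact ⟨1, one_pos, by rw [Subsingleton.elim (B - (1 : ℝ) • 1) 0]; exact .zero⟩
  · obtain ⟨c, hc, hle⟩ := (CFC.exists_pos_algebraMap_le_iff hB.isHermitian).2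
      fun x hx => hB.isStrictlyPositive.spectrum_pos hx
    exact ⟨c, hc, by simpa [Algebra.algebraMap_eq_smul_one, Matrix.le_iff] using hle⟩

variable [Fintype ι]

lemma exists_pos_mul_dotProduct_self_le {B : Matrix ι ι ℝ} (hB : B.PosDef) :
    ∃ c : ℝ, 0 < c ∧ ∀ x : ι → ℝ, c * (x ⬝ᵥ x) ≤ x ⬝ᵥ B *ᵥ x := by
  classical
  obtain ⟨c, hc, hle⟩ := exists_pos_posSemidef_sub_smul_one hB
  refine ⟨c, hc, fun x => ?_⟩
  have h := hle.dotProduct_mulVec_nonneg x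
  simpa [sub_mulVec, dotProduct_sub, smul_mulVec] using h

open MeasureTheory in
lemma summable_fintype_prod {α : Type*} [Countable α] {f : α → ℝ} (hf : Summable f) :
    Summable fun m : ι → α => ∏ i, f (m i) := by
  let _ : MeasurableSpace α := ⊤
  have h_count : Measure.pi (fun _ : ι => (Measure.count : Measure α)) = .count :=
    Measure.ext_of_singleton fun m => by simp
  have h := Integrable.fintype_prod (ι := ι) (f := fun _ => f) (μ := fun _ => .count)
    fun _ => integrable_count_iff.2 hf.norm
  rw [h_count, integrable_count_iff] at h
  exact h.of_norm

lemma summable_exp_neg_mul_sq {c : ℝ} (hc : 0 < c) :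
    Summable fun m : ℤ => Real.exp (-Real.pi * c * (m : ℝ) ^ 2) := by
  have h := ((summable_jacobiTheta₂_term_iff 0 (c * I)).2 (by simpa using hc)).norm
  refine h.congr fun m => ?_
  rw [norm_jacobiTheta₂_term, im_ofReal_mul, I_im, zero_im]
  ring_nf

/-- The value at the lattice point `m` of the complex quadratic form with Gram matrix `τ`. -/
def latticeForm (τ : Matrix ι ι ℂ) (m : ι → ℤ) : ℂ :=
  (fun i => (m i : ℂ)) ⬝ᵥ τ *ᵥ fun i => (m i : ℂ)

/-- The theta constant `θ(τ) = ∑ exp(πi mᵗτm)`, summed over the lattice `ℤ^ι`. -/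
noncomputable def siegelTheta (τ : Matrix ι ι ℂ) : ℂ :=
  ∑' m : ι → ℤ, cexp (Real.pi * I * latticeForm τ m)

/-- Membership in the Siegel upper half space. -/
structure IsSiegel (τ : Matrix ι ι ℂ) : Prop where
  isSymm : τ.IsSymm
  posDef_im : (τ.map Complex.im).PosDef

lemma latticeForm_add (τ S : Matrix ι ι ℂ) (m : ι → ℤ) :
    latticeForm (τ + S) m = latticeForm τ m + latticeForm S m := by
  rw [latticeForm, add_mulVec, dotProduct_add, latticeForm, latticeForm]

lemma im_latticeForm (τ : Matrix ι ι ℂ) (m : ι → ℤ) : (latticeForm τ m).im =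
    (fun i => (m i : ℝ)) ⬝ᵥ τ.map Complex.im *ᵥ fun i => (m i : ℝ) := by
  simp [latticeForm, dotProduct, mulVec, im_sum]

lemma IsSiegel.summable {τ : Matrix ι ι ℂ} (hτ : IsSiegel τ) :
    Summable fun m : ι → ℤ => cexp (Real.pi * I * latticeForm τ m) := by
  obtain ⟨c, hc, hle⟩ := exists_pos_mul_dotProduct_self_le hτ.posDef_im
  refine (summable_fintype_prod (summable_exp_neg_mul_sq hc)).of_norm_bounded fun m => ?_
  have h_norm : ‖cexp (Real.pi * I * latticeForm τ m)‖ =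
      Real.exp (-Real.pi * (latticeForm τ m).im) := by
    rw [norm_exp]
    simp
  rw [h_norm, ← Real.exp_sum, ← Finset.mul_sum, Real.exp_le_exp, im_latticeForm, mul_assoc]
  refine mul_le_mul_of_nonpos_left ?_ (neg_nonpos.2 Real.pi_nonneg)
  simpa only [dotProduct, sq] using hle fun i => (m i : ℝ)

lemma siegelTheta_add_of_even (τ : Matrix ι ι ℂ) {S : Matrix ι ι ℂ}
    (hS : ∀ m, ∃ d : ℤ, latticeForm S m = 2 * d) : siegelTheta (τ + S) = siegelTheta τ := by
  refine tsum_congr fun m => ?_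
  obtain ⟨d, hd⟩ := hS m
  have h_period : Real.pi * I * (2 * d) = d * (2 * Real.pi * I) := by ring
  rw [latticeForm_add, mul_add, exp_add, hd, h_period, exp_int_mul_two_pi_mul_I, mul_one]

end ThetaConstant

section ThetaInversion

open Complex

variable {ι : Type*} [DecidableEq ι] {τ : Matrix ι ι ℂ} {k : ι}

/-- The action of `partialInversion ℂ k` on the Siegel upper half space: the inversion
`τ ↦ -τ⁻¹` performed in the `k`-th coordinate only. Meaningful for `τ k k ≠ 0`. -/
noncomputable def invertAt (k : ι) (τ : Matrix ι ι ℂ) : Matrix ι ι ℂ :=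
  τ - (τ k k)⁻¹ • vecMulVec (τ.row k - Pi.single k 1) (τ.row k - Pi.single k 1) - single k k 2

lemma invertAt_apply_self (ht : τ k k ≠ 0) : invertAt k τ k k = -1 / τ k k := by
  simp only [invertAt, Matrix.sub_apply, Matrix.smul_apply, vecMulVec_apply,
    Pi.sub_apply, row_apply, Pi.single_eq_same, single_apply_same, smul_eq_mul]
  field_simp
  ring

/-- The lattice vector with `k`-th coordinate `0` and the other coordinates prescribed by `y`. -/
def insertZero (k : ι) (y : {j // j ≠ k} → ℤ) : ι → ℤ := (Equiv.funSplitAt k ℤ).symm (0, y)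

lemma insertZero_apply_self (y : {j // j ≠ k} → ℤ) : insertZero k y k = 0 := by
  simp [insertZero]

lemma intCast_funSplitAt_symm (a : ℤ) (y : {j // j ≠ k} → ℤ) :
    (fun i => (((Equiv.funSplitAt k ℤ).symm (a, y) i : ℤ) : ℂ)) =
      (fun i => (insertZero k y i : ℂ)) + Pi.single k (a : ℂ) := by
  ext i
  by_cases h : i = k
  · subst h; simp [insertZero]
  · simp [insertZero, h]

variable [Fintype ι]

lemma dotProduct_mulVec_add_single (hτ : τ.IsSymm) (x : ι → ℂ) (a : ℂ) :
    (x + Pi.single k a) ⬝ᵥ τ *ᵥ (x + Pi.single k a) =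
      x ⬝ᵥ τ *ᵥ x + 2 * a * (τ *ᵥ x) k + a ^ 2 * τ k k := by
  have h_swap : x ⬝ᵥ τ *ᵥ Pi.single k a = a * (τ *ᵥ x) k := by
    rw [dotProduct_mulVec, ← mulVec_transpose, hτ.eq, dotProduct_single, mul_comm]
  rw [mulVec_add, add_dotProduct, dotProduct_add, dotProduct_add, h_swap, single_dotProduct,
    single_dotProduct, mulVec_single]
  simp only [Pi.smul_apply, col_apply, MulOpposite.smul_eq_mul_unop, MulOpposite.unop_op]
  ring

lemma invertAt_mulVec {x : ι → ℂ} (hx : x k = 0) : invertAt k τ *ᵥ x =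
    τ *ᵥ x - ((τ *ᵥ x) k / τ k k) • (τ.row k - Pi.single k 1) := by
  have h_pairing : (τ.row k - Pi.single k 1) ⬝ᵥ x = (τ *ᵥ x) k := by
    rw [sub_dotProduct, single_dotProduct, hx, mul_zero, sub_zero]; rfl
  have h_single : single k k (2 : ℂ) *ᵥ x = 0 := by
    rw [single_mulVec, hx, mul_zero]
    exact Pi.single_zero k
  rw [invertAt, sub_mulVec, sub_mulVec, smul_mulVec, vecMulVec_mulVec, h_pairing, h_single,
    sub_zero, op_smul_eq_smul, smul_smul, inv_mul_eq_div]

lemma dotProduct_invertAt_mulVec {x : ι → ℂ} (hx : x k = 0) :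
    x ⬝ᵥ invertAt k τ *ᵥ x = x ⬝ᵥ τ *ᵥ x - (τ *ᵥ x) k ^ 2 / τ k k := by
  have h_row : x ⬝ᵥ τ.row k = (τ *ᵥ x) k := dotProduct_comm _ _
  rw [invertAt_mulVec hx, dotProduct_sub, dotProduct_smul, dotProduct_sub, h_row,
    dotProduct_single, hx, smul_eq_mul]
  ring

lemma invertAt_mulVec_apply_self {x : ι → ℂ} (hx : x k = 0) (ht : τ k k ≠ 0) :
    (invertAt k τ *ᵥ x) k = (τ *ᵥ x) k / τ k k := by
  rw [invertAt_mulVec hx]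
  simp only [Pi.sub_apply, Pi.smul_apply, row_apply, Pi.single_eq_same, smul_eq_mul]
  field_simp
  ring

lemma IsSiegel.siegelTheta_eq_tsum_jacobiTheta₂ (hτ : IsSiegel τ) (k : ι) :
    siegelTheta τ = ∑' y : {j // j ≠ k} → ℤ, cexp (Real.pi * I * latticeForm τ (insertZero k y)) *
      jacobiTheta₂ ((τ *ᵥ fun i => (insertZero k y i : ℂ)) k) (τ k k) := by
  let e : (ι → ℤ) ≃ ({j // j ≠ k} → ℤ) × ℤ := (Equiv.funSplitAt k ℤ).trans (Equiv.prodComm _ _)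
  have h_term (y : {j // j ≠ k} → ℤ) (a : ℤ) :
      cexp (Real.pi * I * latticeForm τ (e.symm (y, a))) =
        cexp (Real.pi * I * latticeForm τ (insertZero k y)) *
          jacobiTheta₂_term a ((τ *ᵥ fun i => (insertZero k y i : ℂ)) k) (τ k k) := by
    have h_split : (fun i => (e.symm (y, a) i : ℂ)) = _ := intCast_funSplitAt_symm a y
    rw [latticeForm, h_split, dotProduct_mulVec_add_single hτ.isSymm, jacobiTheta₂_term, ← exp_add,
      latticeForm]
    ring_nf
  have h_summable := e.symm.summable_iff.2 hτ.summable
  calc siegelTheta τ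
    _ = ∑' z, cexp (Real.pi * I * latticeForm τ (e.symm z)) := (e.symm.tsum_eq _).symm
    _ = ∑' y, ∑' a, cexp (Real.pi * I * latticeForm τ (e.symm (y, a))) := h_summable.tsum_prod
    _ = _ := by simp only [h_term, tsum_mul_left, jacobiTheta₂]

omit [DecidableEq ι] [Fintype ι] in
lemma IsSiegel.apply_self_ne_zero (hτ : IsSiegel τ) (k : ι) : τ k k ≠ 0 := fun h =>
  hτ.posDef_im.diag_pos.ne' (by simp [h] : τ.map Complex.im k k = 0)

lemma IsSiegel.siegelTheta_invertAt_sq (hτ : IsSiegel τ) (hτ' : IsSiegel (invertAt k τ)) :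
    siegelTheta (invertAt k τ) ^ 2 = -I * τ k k * siegelTheta τ ^ 2 := by
  have ht : τ k k ≠ 0 := hτ.apply_self_ne_zero k
  have h_sq : ((-I * τ k k) ^ (1 / 2 : ℂ)) ^ 2 = -I * τ k k := by
    rw [one_div]; exact cpow_nat_inv_pow _ two_ne_zero
  have h_ne : (-I * τ k k) ^ (1 / 2 : ℂ) ≠ 0 := by simp [ht, cpow_eq_zero_iff]
  suffices siegelTheta (invertAt k τ) = (-I * τ k k) ^ (1 / 2 : ℂ) * siegelTheta τ by
    rw [this, mul_pow, h_sq]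
  rw [hτ'.siegelTheta_eq_tsum_jacobiTheta₂ k, hτ.siegelTheta_eq_tsum_jacobiTheta₂ k,
    ← tsum_mul_left]
  refine tsum_congr fun y => ?_
  set x : ι → ℂ := fun i => (insertZero k y i : ℂ) with hx
  have hxk : x k = 0 := by simp only [hx, insertZero_apply_self, Int.cast_zero]
  rw [latticeForm, latticeForm, ← hx, dotProduct_invertAt_mulVec hxk,
    invertAt_mulVec_apply_self hxk ht, invertAt_apply_self ht]
  set b := (τ *ᵥ x) k
  have h_exp : -(Real.pi * I * (b ^ 2 / τ k k)) = -Real.pi * I * b ^ 2 / τ k k := by ring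
  rw [jacobiTheta₂_functional_equation b, mul_sub, sub_eq_add_neg, exp_add, h_exp]
  field_simp [h_ne]

omit [Fintype ι] in
lemma isSiegel_I_smul_one : IsSiegel (I • (1 : Matrix ι ι ℂ)) where
  isSymm := by simp [IsSymm]
  posDef_im := by
    have h : (I • (1 : Matrix ι ι ℂ)).map Complex.im = 1 := by
      ext i j
      by_cases hij : i = j <;> simp [hij, one_apply]
    exact h ▸ PosDef.one

lemma siegelTheta_I_smul_one_ne_zero : siegelTheta (I • (1 : Matrix ι ι ℂ)) ≠ 0 := by
  have h_term (m : ι → ℤ) : cexp (Real.pi * I * latticeForm (I • 1) m) =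
      (Real.exp (-Real.pi * ∑ i, (m i : ℝ) ^ 2) : ℝ) := by
    have h_form : latticeForm (I • 1) m = I * ∑ i, (m i : ℂ) ^ 2 := by
      rw [latticeForm, smul_mulVec, one_mulVec, dotProduct_smul, smul_eq_mul]
      simp only [dotProduct, sq]
    push_cast
    rw [h_form, ← mul_assoc, mul_assoc (Real.pi : ℂ) I I, I_mul_I, mul_neg_one]
  have h_summable := (isSiegel_I_smul_one (ι := ι)).summable
  simp only [h_term, ← ofReal_tsum, siegelTheta, summable_ofReal, ne_eq, ofReal_eq_zero]
    at h_summable ⊢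
  exact (h_summable.tsum_pos (fun _ => (Real.exp_pos _).le) 0 (Real.exp_pos _)).ne'

end ThetaInversion

section SiegelFrame

open Complex
open scoped ComplexOrder

/-! ### Siegel frames -/

variable {ι : Type*}

lemma isSiegel_of_posDef [Finite ι] {τ : Matrix ι ι ℂ} (hτ : τ.IsSymm)
    (h : (-I • (τ - τᴴ)).PosDef) : IsSiegel τ := by
  cases nonempty_fintype ι
  have h_im : -I • (τ - τᴴ) = (2 : ℂ) • (τ.map im).map ofRealHom := by
    ext i j
    simp only [Matrix.smul_apply, Matrix.sub_apply, conjTranspose_apply, hτ.apply,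
      Complex.star_def, sub_conj, map_apply, smul_eq_mul, ofRealHom_eq_coe,
      ofReal_mul, ofReal_ofNat]
    linear_combination (-2 * (τ i j).im : ℂ) * I_mul_I
  refine ⟨hτ, posDef_iff_dotProduct_mulVec.2 ⟨hτ.map im, fun x hx => ?_⟩⟩
  have h_star : star (ofRealHom ∘ x) = ofRealHom ∘ x := by
    ext i
    exact conj_ofReal _
  have h_mulVec : (τ.map im).map ofRealHom *ᵥ (ofRealHom ∘ x) = ofRealHom ∘ (τ.map im *ᵥ x) :=
    funext fun i => (RingHom.map_mulVec ofRealHom _ x i).symm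
  have h_pos := h.dotProduct_mulVec_pos
    (x := ofRealHom ∘ x) (by simpa [funext_iff] using hx)
  rw [h_im, h_star, smul_mulVec, dotProduct_smul, h_mulVec, ← RingHom.map_dotProduct,
    smul_eq_mul, mul_pos_iff_of_pos_left two_pos] at h_pos
  exact Complex.real_lt_real.1 h_pos

variable [Fintype ι] [DecidableEq ι]

/-- The bases of the positive Lagrangian subspaces of `ℂ^(ι ⊕ ι)`, written as the columns of `M`.
Up to a change of basis they are the matrices `(τ, 1)` with `τ` in the Siegel upper half space. -/
structure IsSiegelFrame (M : Matrix (ι ⊕ ι) ι ℂ) : Prop where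
  isotropic : Mᵀ * J ι ℂ * M = 0
  posDef : (-I • (Mᴴ * J ι ℂ * M)).PosDef

lemma IsSiegelFrame.mul_left {B : Matrix (ι ⊕ ι) (ι ⊕ ι) ℂ} {M : Matrix (ι ⊕ ι) ι ℂ}
    (hB : B ∈ symplecticGroup ι ℂ) (h_real : Bᴴ = Bᵀ) (hM : IsSiegelFrame M) :
    IsSiegelFrame (B * M) where
  isotropic := by
    calc (B * M)ᵀ * J ι ℂ * (B * M)
      _ = Mᵀ * (Bᵀ * J ι ℂ * B) * M := by simp only [transpose_mul, Matrix.mul_assoc]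
      _ = 0 := by rw [SymplecticGroup.mem_iff'.1 hB, hM.isotropic]
  posDef := by
    have h : (B * M)ᴴ * J ι ℂ * (B * M) = Mᴴ * J ι ℂ * M := calc
      _ = Mᴴ * (Bᵀ * J ι ℂ * B) * M := by
        simp only [conjTranspose_mul, h_real, Matrix.mul_assoc]
      _ = _ := by rw [SymplecticGroup.mem_iff'.1 hB]
    exact h ▸ hM.posDef

lemma fromCols_mul_J_mul_fromRows {κ : Type*} (A B : Matrix κ ι ℂ) (P Q : Matrix ι κ ℂ) :
    fromCols A B * J ι ℂ * fromRows P Q = B * P - A * Q := by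
  rw [J, fromCols_mul_fromBlocks, fromCols_mul_fromRows]
  simp only [Matrix.mul_zero, Matrix.mul_one, zero_add, add_zero, Matrix.mul_neg, Matrix.neg_mul]
  abel

lemma IsSiegelFrame.isUnit_det_toRows₂ {M : Matrix (ι ⊕ ι) ι ℂ} (hM : IsSiegelFrame M) :
    IsUnit M.toRows₂.det := by
  rw [isUnit_iff_ne_zero]
  intro h
  obtain ⟨z, hz, hQz⟩ := exists_mulVec_eq_zero_iff.2 h
  have h_pos := hM.posDef.dotProduct_mulVec_pos hz
  rw [← fromRows_toRows M, conjTranspose_fromRows_eq_fromCols_conjTranspose,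
    fromCols_mul_J_mul_fromRows, smul_mulVec, sub_mulVec, ← mulVec_mulVec, ← mulVec_mulVec, hQz,
    mulVec_zero, sub_zero, dotProduct_smul, dotProduct_mulVec, ← star_mulVec, hQz, star_zero,
    zero_dotProduct, smul_zero] at h_pos
  exact h_pos.false

lemma IsSiegelFrame.isSiegel {τ Q : Matrix ι ι ℂ} (hM : IsSiegelFrame (fromRows (τ * Q) Q)) :
    IsSiegel τ := by
  have hQ : IsUnit Q := Q.isUnit_iff_isUnit_det.2 <| by simpa using hM.isUnit_det_toRows₂
  have h_isotropic : Qᵀ * (τ - τᵀ) * Q = 0 := by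
    rw [← hM.isotropic, transpose_fromRows, fromCols_mul_J_mul_fromRows, transpose_mul]
    noncomm_ring
  have h_posDef : (star Q * (-I • (τ - τᴴ)) * Q).PosDef := by
    convert hM.posDef using 1
    rw [conjTranspose_fromRows_eq_fromCols_conjTranspose, fromCols_mul_J_mul_fromRows,
      conjTranspose_mul, star_eq_conjTranspose, Matrix.mul_smul, Matrix.smul_mul]
    noncomm_ring
  have hτ : τ - τᵀ = 0 :=
    (Q.isUnit_transpose.2 hQ).mul_right_eq_zero.1 (hQ.mul_left_eq_zero.1 h_isotropic)
  exact isSiegel_of_posDef (sub_eq_zero.1 hτ).symm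
    ((IsUnit.posDef_star_left_conjugate_iff hQ).1 h_posDef)

lemma IsSiegelFrame.exists_eq_fromRows {M : Matrix (ι ⊕ ι) ι ℂ} (hM : IsSiegelFrame M) :
    ∃ τ Q, IsSiegel τ ∧ IsUnit Q.det ∧ M = fromRows (τ * Q) Q := by
  have hQ := hM.isUnit_det_toRows₂
  have h : M = fromRows (M.toRows₁ * M.toRows₂⁻¹ * M.toRows₂) M.toRows₂ := by
    rw [nonsing_inv_mul_cancel_right _ _ hQ, fromRows_toRows]
  exact ⟨_, _, (h ▸ hM).isSiegel, hQ, h⟩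

/-- The Siegel frame `(i, 1)`, of the base point `i` of the Siegel upper half space. -/
noncomputable def baseFrame (ι : Type*) [DecidableEq ι] : Matrix (ι ⊕ ι) ι ℂ :=
  fromRows (I • 1) 1

lemma isSiegelFrame_baseFrame : IsSiegelFrame (baseFrame ι) where
  isotropic := by
    rw [baseFrame, transpose_fromRows, fromCols_mul_J_mul_fromRows]
    simp
  posDef := by
    rw [baseFrame, conjTranspose_fromRows_eq_fromCols_conjTranspose, fromCols_mul_J_mul_fromRows]
    have h : (-I • ((1 : Matrix ι ι ℂ)ᴴ * (I • 1) - (I • 1)ᴴ * 1)) = (2 : ℂ) • 1 := by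
      simp [smul_smul, two_smul]
    exact h ▸ PosDef.one.smul two_pos

/-- The function `(τ, 1) ↦ θ(τ)²` extended to all Siegel frames `(P, Q)` as a form of weight one,
so that `Sp^q` acts on it by scalars instead of by automorphy factors. -/
noncomputable def thetaSq (M : Matrix (ι ⊕ ι) ι ℂ) : ℂ :=
  siegelTheta (M.toRows₁ * M.toRows₂⁻¹) ^ 2 / M.toRows₂.det

lemma thetaSq_fromRows (τ : Matrix ι ι ℂ) {Q : Matrix ι ι ℂ} (hQ : IsUnit Q.det) :
    thetaSq (fromRows (τ * Q) Q) = siegelTheta τ ^ 2 / Q.det := by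
  rw [thetaSq, toRows₁_fromRows, toRows₂_fromRows, mul_nonsing_inv_cancel_right _ _ hQ]

lemma thetaSq_baseFrame_ne_zero : thetaSq (baseFrame ι) ≠ 0 := by
  rw [baseFrame, ← Matrix.mul_one (I • 1), thetaSq_fromRows _ (by simp), det_one, div_one]
  exact pow_ne_zero 2 siegelTheta_I_smul_one_ne_zero

lemma thetaSq_translate_mul {S : Matrix ι ι ℂ} (hS : ∀ m, ∃ d : ℤ, latticeForm S m = 2 * d)
    {M : Matrix (ι ⊕ ι) ι ℂ} (hM : IsSiegelFrame M) :
    thetaSq ((fromBlocks 1 S 0 1 : Matrix (ι ⊕ ι) (ι ⊕ ι) ℂ) * M) = thetaSq M := by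
  obtain ⟨τ, Q, -, hQ, rfl⟩ := hM.exists_eq_fromRows
  rw [fromBlocks_mul_fromRows, Matrix.one_mul, Matrix.zero_mul, Matrix.one_mul, zero_add,
    ← Matrix.add_mul, thetaSq_fromRows _ hQ, thetaSq_fromRows _ hQ, siegelTheta_add_of_even τ hS]

/-- The automorphy factor `C * τ + D` of `partialInversion ℂ k`, whose lower blocks are `C` and
`D`. -/
noncomputable def inversionFactor (k : ι) (τ : Matrix ι ι ℂ) : Matrix ι ι ℂ :=
  single k k 1 * τ + (1 - single k k 1)

lemma inversionFactor_eq (k : ι) (τ : Matrix ι ι ℂ) :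
    inversionFactor k τ = 1 + vecMulVec (Pi.single k 1) (τ.row k - Pi.single k 1) := by
  rw [inversionFactor, single_eq_single_vecMulVec_single, vecMulVec_mul, single_one_vecMul,
    sub_eq_add_neg (τ.row k), vecMulVec_add, vecMulVec_neg]
  abel

lemma det_inversionFactor (k : ι) (τ : Matrix ι ι ℂ) : (inversionFactor k τ).det = τ k k := by
  rw [inversionFactor_eq, vecMulVec_eq Unit, det_one_add_replicateCol_mul_replicateRow]
  simp

lemma invertAt_mul_inversionFactor {τ : Matrix ι ι ℂ} (hτ : τ.IsSymm) {k : ι}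
    (hk : τ k k ≠ 0) :
    invertAt k τ * inversionFactor k τ = (1 - single k k 1) * τ + -single k k 1 := by
  set e : ι → ℂ := Pi.single k 1 with he
  set u : ι → ℂ := τ.row k - e with hu
  have h_ee : e ⬝ᵥ e = 1 := by simp [he]
  have h_ue : u ⬝ᵥ e = τ k k - 1 := by simp [hu, he]
  have h_single : single k k 1 = vecMulVec e e := single_eq_single_vecMulVec_single k k
  have h_two : single k k 2 = (2 : ℂ) • vecMulVec e e := by simp [← h_single]
  have h_col : τ *ᵥ e = u + e := by
    rw [hu, sub_add_cancel, he, mulVec_single_one, ← hτ.eq, col_transpose, hτ.eq]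
  have h_row : e ᵥ* τ = u + e := by rw [hu, sub_add_cancel, he, single_one_vecMul]
  rw [invertAt, inversionFactor_eq, h_two, h_single, ← he, ← hu, Matrix.mul_add, Matrix.mul_one,
    Matrix.sub_mul 1, Matrix.one_mul, vecMulVec_mul, h_row, mul_vecMulVec, sub_mulVec, sub_mulVec,
    smul_mulVec, smul_mulVec, vecMulVec_mulVec, vecMulVec_mulVec, h_col, h_ue, h_ee]
  simp only [sub_vecMulVec, smul_vecMulVec, vecMulVec_add, add_vecMulVec, op_smul_eq_smul]
  match_scalars <;> field_simp <;> ring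

lemma partialInversion_mul_fromRows {τ : Matrix ι ι ℂ} (hτ : τ.IsSymm) {k : ι} (hk : τ k k ≠ 0)
    (Q : Matrix ι ι ℂ) :
    partialInversion ℂ k * fromRows (τ * Q) Q =
      fromRows (invertAt k τ * (inversionFactor k τ * Q)) (inversionFactor k τ * Q) := by
  rw [← Matrix.mul_assoc (invertAt k τ), invertAt_mul_inversionFactor hτ hk, inversionFactor,
    partialInversion, fromBlocks_mul_fromRows]
  simp only [Matrix.add_mul, Matrix.mul_assoc]

lemma thetaSq_partialInversion_mul (k : ι) {M : Matrix (ι ⊕ ι) ι ℂ} (hM : IsSiegelFrame M)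
    (hM' : IsSiegelFrame (partialInversion ℂ k * M)) :
    thetaSq (partialInversion ℂ k * M) = -I * thetaSq M := by
  obtain ⟨τ, Q, hτ, hQ, rfl⟩ := hM.exists_eq_fromRows
  have hk := hτ.apply_self_ne_zero k
  have hQ' : IsUnit (inversionFactor k τ * Q).det := by
    rw [det_mul, det_inversionFactor]
    exact hk.isUnit.mul hQ
  rw [partialInversion_mul_fromRows hτ.isSymm hk] at hM' ⊢
  rw [thetaSq_fromRows _ hQ', thetaSq_fromRows _ hQ, hτ.siegelTheta_invertAt_sq hM'.isSiegel,
    det_mul, det_inversionFactor]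
  field_simp [hQ.ne_zero]

end SiegelFrame

namespace Spq

open Sum Complex

variable {g : ℕ}

/-! ### The theta character -/

/-- The inclusion of `Sp^q` into the complex matrices, acting on Siegel frames by
multiplication. -/
def toComplex : Spq g →* Matrix (HypIdx g) (HypIdx g) ℂ :=
  (Int.castRingHom ℂ).mapMatrix.toMonoidHom.comp ((Units.coeHom _).comp (Spq g).subtype)

lemma toComplex_apply (A : Spq g) : toComplex A = A.val.val.map (Int.castRingHom ℂ) := rfl

lemma isSiegelFrame_toComplex_mul (A : Spq g) {M : Matrix (HypIdx g) (Fin g) ℂ}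
    (hM : IsSiegelFrame M) : IsSiegelFrame (toComplex A * M) :=
  hM.mul_left (SymplecticGroup.map_mem (mem_symplecticGroup.2 A.2.1) (Int.castRingHom ℂ)) <| by
    ext p q
    simp [toComplex_apply]

lemma toComplex_quarterTurn (k : Fin g) : toComplex (quarterTurn k) = partialInversion ℂ k := by
  change (partialInversion ℤ k).map (Int.castRingHom ℂ) = _
  ext (i | i) (j | j) <;> simp [partialInversion, single_apply, one_apply]

lemma coe_elementary_inl (i j : Fin g) (c : ℤ) :
    (elementary (inl_ne_swap_inl i j) c).val.val =
      fromBlocks 1 (single j i (-c) + single i j (-c)) 0 1 := by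
  refine Matrix.ext_of_mulVec_single fun p => ?_
  rw [← smul_def, elementary_smul, mulVec_single_one]
  ext (r | r) <;> obtain s | s := p <;>
    simp [pairSign, Pi.single_apply, single_apply, one_apply, ite_and, eq_comm]

lemma thetaSq_elementary_inl_mul (i j : Fin g) (c : ℤ) {M : Matrix (HypIdx g) (Fin g) ℂ}
    (hM : IsSiegelFrame M) :
    thetaSq (toComplex (elementary (inl_ne_swap_inl i j) c) * M) = thetaSq M := by
  have h : toComplex (elementary (inl_ne_swap_inl i j) c) =
      fromBlocks 1 (single j i (-c : ℂ) + single i j (-c : ℂ)) 0 1 := by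
    rw [toComplex_apply, coe_elementary_inl, fromBlocks_map,
      Matrix.map_one _ (map_zero _) (map_one _), Matrix.map_zero _ (map_zero _),
      Matrix.map_add _ (map_add _), Matrix.map_single, Matrix.map_single, map_neg, eq_intCast]
  rw [h]
  refine thetaSq_translate_mul (fun m => ⟨-c * m i * m j, ?_⟩) hM
  simp only [latticeForm, add_mulVec, single_mulVec_eq, dotProduct_add, dotProduct_smul,
    dotProduct_single_one]
  push_cast
  ring

lemma thetaSq_quarterTurn_mul (k : Fin g) {M : Matrix (HypIdx g) (Fin g) ℂ}
    (hM : IsSiegelFrame M) : thetaSq (toComplex (quarterTurn k) * M) = -I * thetaSq M := by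
  have hM' := isSiegelFrame_toComplex_mul (quarterTurn k) hM
  rw [toComplex_quarterTurn] at hM' ⊢
  exact thetaSq_partialInversion_mul k hM hM'

theorem exists_thetaSq_toComplex_mul (A : Spq g) :
    ∃ c : ℂ, ∀ M : Matrix (HypIdx g) (Fin g) ℂ, IsSiegelFrame M →
      thetaSq (toComplex A * M) = c * thetaSq M := by
  have hA : A ∈ Subgroup.closure _ :=
    closure_elementary_inl_union_quarterTurn (g := g) ▸ Subgroup.mem_top A
  induction hA using Subgroup.closure_induction with
  | mem A hA =>
    obtain ⟨i, j, c, rfl⟩ | ⟨k, rfl⟩ := hA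
    · exact ⟨1, fun M hM => by rw [thetaSq_elementary_inl_mul i j c hM, one_mul]⟩
    · exact ⟨-I, fun M hM => thetaSq_quarterTurn_mul k hM⟩
  | one => exact ⟨1, fun M _ => by rw [map_one, Matrix.one_mul, one_mul]⟩
  | mul A B _ _ hA hB =>
    obtain ⟨a, ha⟩ := hA
    obtain ⟨b, hb⟩ := hB
    refine ⟨a * b, fun M hM => ?_⟩
    rw [map_mul, Matrix.mul_assoc, ha _ (isSiegelFrame_toComplex_mul B hM), hb M hM, mul_assoc]
  | inv A _ hA =>
    obtain ⟨a, ha⟩ := hA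
    have h (M : Matrix (HypIdx g) (Fin g) ℂ) (hM : IsSiegelFrame M) :
        a * thetaSq (toComplex A⁻¹ * M) = thetaSq M := by
      rw [← ha _ (isSiegelFrame_toComplex_mul A⁻¹ hM), ← Matrix.mul_assoc, ← map_mul,
        mul_inv_cancel, map_one, Matrix.one_mul]
    have ha₀ : a ≠ 0 := left_ne_zero_of_mul <|
      (h _ isSiegelFrame_baseFrame).symm ▸ thetaSq_baseFrame_ne_zero
    exact ⟨a⁻¹, fun M hM => by rw [← h M hM, inv_mul_cancel_left₀ ha₀]⟩

/-- The character of `Sp^q` through which it acts on `thetaSq`. -/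
noncomputable def thetaMultiplier : Spq g →* ℂ where
  toFun A := thetaSq (toComplex A * baseFrame (Fin g)) / thetaSq (baseFrame (Fin g))
  map_one' := by rw [map_one, Matrix.one_mul, div_self thetaSq_baseFrame_ne_zero]
  map_mul' A B := by
    obtain ⟨a, ha⟩ := exists_thetaSq_toComplex_mul A
    rw [map_mul, Matrix.mul_assoc, ha _ (isSiegelFrame_toComplex_mul B isSiegelFrame_baseFrame),
      ha _ isSiegelFrame_baseFrame, mul_div_cancel_right₀ _ thetaSq_baseFrame_ne_zero,
      mul_div_assoc]

lemma thetaMultiplier_quarterTurn (k : Fin g) : thetaMultiplier (quarterTurn k) = -I := by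
  change thetaSq (toComplex (quarterTurn k) * baseFrame (Fin g)) / thetaSq (baseFrame (Fin g)) = -I
  rw [thetaSq_quarterTurn_mul k isSiegelFrame_baseFrame,
    mul_div_cancel_right₀ _ thetaSq_baseFrame_ne_zero]

theorem orderOf_abelianization_of_quarterTurn (k : Fin g) :
    orderOf (Abelianization.of (quarterTurn k)) = 4 := by
  refine orderOf_eq_prime_pow (p := 2) (n := 1) (fun h => ?_) ?_
  · have h_sq := congrArg (Abelianization.lift thetaMultiplier.toHomUnits) h
    rw [map_pow, Abelianization.lift_apply_of, map_one, Units.ext_iff] at h_sq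
    rw [Units.val_pow_eq_pow_val, MonoidHom.coe_toHomUnits, thetaMultiplier_quarterTurn] at h_sq
    norm_num at h_sq
  · rw [← map_pow]
    exact (congrArg _ (quarterTurn_pow_four k)).trans (map_one _)

end Spq

theorem Spq_stabilization_abelianization_general (g : ℕ) (hg : 3 ≤ g) :
    ∃ φ : ↥(Spq g) →* ↥(Spq (g + 1)),
      (∀ A : ↥(Spq g), (φ A).val.val = extendMat A.val.val) ∧
      Function.Bijective (Abelianization.map φ) := by
  let k : Fin g := ⟨0, by omega⟩
  have h_map : Abelianization.map Spq.stabilize (Abelianization.of (Spq.quarterTurn k)) =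
      Abelianization.of (Spq.quarterTurn k.castSucc) := by
    rw [Abelianization.map_of, Spq.stabilize_quarterTurn]
  refine ⟨Spq.stabilize, Spq.coe_stabilize,
    bijective_of_orderOf_eq (Spq.zpowers_abelianization_of_quarterTurn hg k) ?_ ?_⟩
  · rw [h_map]
    exact Spq.zpowers_abelianization_of_quarterTurn (by omega) k.castSucc
  · rw [h_map, Spq.orderOf_abelianization_of_quarterTurn,
      Spq.orderOf_abelianization_of_quarterTurn]

/-- For every `g ≥ 5`, the block-inclusion homomorphism `Sp^q_{2g}(ℤ) → Sp^q_{2(g+1)}(ℤ)`,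
extending a matrix by the identity on one additional symplectic basis pair, induces an
isomorphism on abelianisations. -/
theorem Spq_stabilization_abelianization (g : ℕ) (hg : 5 ≤ g) :
    ∃ φ : ↥(Spq g) →* ↥(Spq (g + 1)),
      (∀ A : ↥(Spq g), (φ A).val.val = extendMat A.val.val) ∧
      Function.Bijective (Abelianization.map φ) :=
  Spq_stabilization_abelianization_general g (by omega)
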